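/- arXiv:2310.13502 — 3 statements merged into one kernel-verified Lean document; each statement's English description precedes it below -/
import Mathlib

section
/- (Magic of potions, main part.) Let f = {a_i}_{i∈I} and g = {b_j}_{j∈J} be families of homogeneous elements of an M-graded commutative ring A, with f relevant and closed under homogeneous divisors (f = f̲). Let S and T be the multiplicative submonoids generated by f and by f ∪ g, and let χ : A_{(f)} → A_{(f∪g)} be the canonical ring homomorphism between potions (characterized by val ∘ χ = (canonical map Localization S → Localization T) ∘ val). For each j ∈ J fix n_j > 0 and finitely supported ν_j⁺, ν_j⁻ : I → ℕ such that b_j^{n_j} · ∏_i a_i^{ν_j⁻(i)} and ∏_i a_i^{ν_j⁺(i)} have the same degree, and let z_j ∈ A_{(f)} be the element with val(z_j) = (b_j^{n_j} · ∏_i a_i^{ν_j⁻(i)}) / (∏_i a_i^{ν_j⁺(i)}). Then χ exhibits A_{(f∪g)} as the localization of A_{(f)} at the multiplicative submonoid generated by {z_j}_{j∈J}; i.e., IsLocalization (Submonoid.closure {z_j : j ∈ J}) A_{(f∪g)} holds via χ. -/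
/-!
Statement 5 (Magic of potions, main part): with `f` relevant and closed under
homogeneous divisors, `χ : A_{(f)} → A_{(f∪g)}` the canonical ring homomorphism, and
`z j ∈ A_{(f)}` the elements with value `(b_j ^ n_j * ∏ᵢ aᵢ ^ ν_j⁻ i) / (∏ᵢ aᵢ ^ ν_j⁺ i)`,
the map `χ` exhibits `A_{(f∪g)}` as the localization of `A_{(f)}` at the
multiplicative submonoid generated by the `z j`.
-/

/-- The set of degrees of homogeneous divisors of members of the family `f`. -/
def divisorDegrees {M A I : Type*} [AddCommGroup M] [CommRing A]
    (𝒜 : M → Submodule ℤ A) (f : I → A) : Set M :=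
  {m | ∃ x : A, x ≠ 0 ∧ x ∈ 𝒜 m ∧ ∃ i, x ∣ f i}

/-- A family `f` of homogeneous elements of an `M`-graded ring is *relevant* if every
`x ∈ M` has a positive multiple lying in the subgroup of `M` generated by the degrees
of the homogeneous divisors of members of `f`. -/
def IsRelevant {M A I : Type*} [AddCommGroup M] [CommRing A]
    (𝒜 : M → Submodule ℤ A) (f : I → A) : Prop :=
  ∀ x : M, ∃ n : ℕ, 0 < n ∧ n • x ∈ AddSubgroup.closure (divisorDegrees 𝒜 f)

/-- A product of powers of members of a family `f` belongs to the multiplicative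
submonoid generated by `f`. -/
theorem prodPow_mem_closure {A I : Type*} [CommRing A] (f : I → A) (θ : I →₀ ℕ) :
    (∏ i ∈ θ.support, f i ^ θ i) ∈ Submonoid.closure (Set.range f) :=
  Submonoid.prod_mem _ fun i _ =>
    Submonoid.pow_mem _ (Submonoid.subset_closure (Set.mem_range_self i)) _

/-- The canonical ring homomorphism between localizations of the same ring at two
nested submonoids `S ≤ T`. -/
noncomputable def locMap {A : Type*} [CommRing A] {S T : Submonoid A} (h : S ≤ T) :
    Localization S →+* Localization T :=
  IsLocalization.map (Localization T) (RingHom.id A)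
    (show S ≤ Submonoid.comap (RingHom.id A) T from h)

/-!
The ring `A_{(f ∪ g)}` inverts every homogeneous denominator `t` built from `f` and `g`, so the
point is that products of the `z_j` already see each such `t`. Since `n_j` is positive, `z_j` has
the form `(b_j * q) / s` with `q` homogeneous and `s` a product of members of `f`; multiplying these
fractions, every `t` occurs as a homogeneous factor of the numerator of some product
`u = (t * q) / s` of the `z_j`. Then `(x / t) * u = (x * q) / s` gives surjectivity up to
denominators, and `t * a = 0` forces `u * (a / b) = 0`, which controls the kernel. Each `z_j`
becomes a unit because its numerator is itself an admissible denominator.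
-/

open HomogeneousLocalization SetLike

theorem locMap_mk {A : Type*} [CommRing A] {S T : Submonoid A} (h : S ≤ T) (a : A) (s : S) :
    locMap h (Localization.mk a s) = Localization.mk a ⟨s, h s.2⟩ := by
  simp only [locMap, Localization.mk_eq_mk', IsLocalization.map_mk', RingHom.id_apply]

theorem prodPow_mem_graded {ι A σ I : Type*} [AddCommMonoid ι] [CommMonoid A] [SetLike σ A]
    {𝒜 : ι → σ} [GradedMonoid 𝒜] {f : I → A} {d : I → ι} (hf : ∀ i, f i ∈ 𝒜 (d i))
    (θ : I →₀ ℕ) :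
    (∏ i ∈ θ.support, f i ^ θ i) ∈ 𝒜 (θ.sum fun i c => c • d i) :=
  prod_mem_graded _ _ _ fun i _ => pow_mem_graded _ (hf i)

section Potion

variable {ι A σ : Type*} [AddCommMonoid ι] [DecidableEq ι] [CommRing A] [SetLike σ A]
  [AddSubgroupClass σ A] {𝒜 : ι → σ} [GradedRing 𝒜] {S T : Submonoid A}

theorem mk_eq_zero_iff (c : NumDenSameDeg 𝒜 S) :
    HomogeneousLocalization.mk c = 0 ↔ ∃ t ∈ S, t * (c.num : A) = 0 := by
  rw [HomogeneousLocalization.ext_iff_val, val_mk, val_zero, Localization.mk_eq_mk',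
    IsLocalization.mk'_eq_zero_iff, Subtype.exists]
  simp only [exists_prop]

theorem isUnit_mk_of_num_mem (c : NumDenSameDeg 𝒜 S) (hc : (c.num : A) ∈ S) :
    IsUnit (HomogeneousLocalization.mk c) := by
  refine .of_mul_eq_one (.mk ⟨c.deg, c.den, c.num, hc⟩) (val_injective _ ?_)
  rw [val_mul, val_mk, val_mk, Localization.mk_mul, val_one, mul_comm (c.num : A)]
  exact Localization.mk_self ⟨(c.den : A) * c.num, mul_mem c.den_mem hc⟩

theorem mapId_mk (h : S ≤ T) (c : NumDenSameDeg 𝒜 S) :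
    mapId 𝒜 h (.mk c) = .mk ⟨c.deg, c.num, c.den, h c.den_mem⟩ :=
  rfl

theorem val_mapId (h : S ≤ T) (w : HomogeneousLocalization 𝒜 S) :
    (mapId 𝒜 h w).val = locMap h w.val := by
  obtain ⟨c, rfl⟩ := mk_surjective w
  rw [mapId_mk, val_mk, val_mk, locMap_mk]

theorem eq_mapId_of_val_eq_locMap {h : S ≤ T}
    {χ : HomogeneousLocalization 𝒜 S →+* HomogeneousLocalization 𝒜 T}
    (hχ : ∀ w, (χ w).val = locMap h w.val) : χ = mapId 𝒜 h :=
  RingHom.ext fun w => val_injective _ ((hχ w).trans (val_mapId h w).symm)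

theorem isUnit_mapId_of_val_eq_mk (h : S ≤ T) {u : HomogeneousLocalization 𝒜 S} {m : ι} {a : A}
    {s : S} (ha : a ∈ 𝒜 m) (hs : (s : A) ∈ 𝒜 m) (haT : a ∈ T)
    (hu : u.val = Localization.mk a s) : IsUnit (mapId 𝒜 h u) := by
  obtain rfl : u = .mk ⟨m, ⟨a, ha⟩, ⟨s, hs⟩, s.2⟩ := val_injective _ hu
  rw [mapId_mk]
  exact isUnit_mk_of_num_mem _ haT

/-- `DividesNumerator t u` says that the degree-zero fraction `u` can be written as `(t * q) / s`
with `t`, `q` and `s` homogeneous, so that `u` can stand in for `t` as a denominator. The degree of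
`s` is prescribed because `t * q` does not determine it when `t * q = 0`. -/
def DividesNumerator (t : A) (u : HomogeneousLocalization 𝒜 S) : Prop :=
  ∃ δ κ : ι, ∃ q ∈ 𝒜 κ, ∃ s : S,
    t ∈ 𝒜 δ ∧ (s : A) ∈ 𝒜 (δ + κ) ∧ u.val = Localization.mk (t * q) s

namespace DividesNumerator

theorem one_right {t : A} {δ : ι} (htS : t ∈ S) (ht : t ∈ 𝒜 δ) :
    DividesNumerator t (1 : HomogeneousLocalization 𝒜 S) := by
  refine ⟨δ, 0, 1, one_mem_graded 𝒜, ⟨t, htS⟩, ht, by rwa [add_zero], ?_⟩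
  rw [val_one, mul_one, Localization.mk_self_mk]

theorem mul {t t' : A} {u u' : HomogeneousLocalization 𝒜 S} (h : DividesNumerator t u)
    (h' : DividesNumerator t' u') : DividesNumerator (t * t') (u * u') := by
  obtain ⟨δ, κ, q, hq, s, ht, hs, hu⟩ := h
  obtain ⟨δ', κ', q', hq', s', ht', hs', hu'⟩ := h'
  refine ⟨δ + δ', κ + κ', q * q', mul_mem_graded hq hq', s * s', mul_mem_graded ht ht', ?_, ?_⟩
  · rw [add_add_add_comm]
    exact mul_mem_graded hs hs'
  · rw [val_mul, hu, hu', Localization.mk_mul, mul_mul_mul_comm]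

theorem of_val_eq_mk_pow_mul {t r : A} {s : S} {u : HomogeneousLocalization 𝒜 S} {δ μ : ι} {n : ℕ}
    (hn : n ≠ 0) (ht : t ∈ 𝒜 δ) (hr : r ∈ 𝒜 μ) (hs : (s : A) ∈ 𝒜 (n • δ + μ))
    (hu : u.val = Localization.mk (t ^ n * r) s) : DividesNumerator t u := by
  obtain ⟨k, rfl⟩ := Nat.exists_eq_succ_of_ne_zero hn
  refine ⟨δ, k • δ + μ, t ^ k * r, mul_mem_graded (pow_mem_graded k ht) hr, s, ht, ?_, ?_⟩
  · rwa [← add_assoc, ← succ_nsmul']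
  · rw [hu, pow_succ', mul_assoc]

theorem exists_of_mem_closure {X : Set A} {Z : Submonoid (HomogeneousLocalization 𝒜 S)}
    (hX : ∀ x ∈ X, ∃ u ∈ Z, DividesNumerator x u) {t : A} (ht : t ∈ Submonoid.closure X) :
    ∃ u ∈ Z, DividesNumerator t u := by
  induction ht using Submonoid.closure_induction with
  | mem x hx => exact hX x hx
  | one => exact ⟨1, one_mem Z, one_right (one_mem S) (one_mem_graded 𝒜)⟩
  | mul x y _ _ hx hy =>
    obtain ⟨u, huZ, hu⟩ := hx
    obtain ⟨v, hvZ, hv⟩ := hy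
    exact ⟨u * v, mul_mem huZ hvZ, hu.mul hv⟩

theorem exists_mk_mul_mapId_eq (h : S ≤ T) (c : NumDenSameDeg 𝒜 T)
    {u : HomogeneousLocalization 𝒜 S} (hu : DividesNumerator (c.den : A) u) :
    ∃ v, HomogeneousLocalization.mk c * mapId 𝒜 h u = mapId 𝒜 h v := by
  obtain ⟨m, ⟨x, hx⟩, ⟨t, htm⟩, htT⟩ := c
  obtain ⟨δ, κ, q, hq, s, htδ, hs, hu⟩ := hu
  obtain rfl | ht0 := eq_or_ne t 0
  · have := HomogeneousLocalization.subsingleton 𝒜 htT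
    exact ⟨0, Subsingleton.elim _ _⟩
  obtain rfl : m = δ := DirectSum.degree_eq_of_mem_mem 𝒜 htm htδ ht0
  refine ⟨.mk ⟨m + κ, ⟨x * q, mul_mem_graded hx hq⟩, ⟨s, hs⟩, s.2⟩, val_injective _ ?_⟩
  rw [val_mul, val_mapId, val_mapId, hu, val_mk, val_mk, locMap_mk, locMap_mk,
    Localization.mk_mul, Localization.mk_eq_mk_iff, Localization.r_iff_exists]
  refine ⟨1, ?_⟩
  simp only [Submonoid.coe_mul]
  ring

theorem mul_mk_eq_zero {t : A} {u : HomogeneousLocalization 𝒜 S} (hu : DividesNumerator t u)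
    {c : NumDenSameDeg 𝒜 S} (hc : t * (c.num : A) = 0) : u * HomogeneousLocalization.mk c = 0 := by
  obtain ⟨-, -, q, -, s, -, -, hu⟩ := hu
  apply val_injective
  rw [val_mul, hu, val_mk, Localization.mk_mul, mul_right_comm, hc, zero_mul, Localization.mk_zero,
    val_zero]

end DividesNumerator

theorem exists_mul_eq_zero_of_mapId_eq_zero {Z : Submonoid (HomogeneousLocalization 𝒜 S)}
    (h : S ≤ T) (hZ : ∀ t ∈ T, ∃ u ∈ Z, DividesNumerator t u) {w : HomogeneousLocalization 𝒜 S}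
    (hw : mapId 𝒜 h w = 0) : ∃ u ∈ Z, u * w = 0 := by
  obtain ⟨c, rfl⟩ := mk_surjective w
  rw [mapId_mk, mk_eq_zero_iff] at hw
  obtain ⟨t, htT, htc⟩ := hw
  obtain ⟨u, huZ, hu⟩ := hZ t htT
  exact ⟨u, huZ, hu.mul_mk_eq_zero htc⟩

theorem isLocalization_mapId {Z : Submonoid (HomogeneousLocalization 𝒜 S)} (h : S ≤ T)
    (hunit : ∀ u ∈ Z, IsUnit (mapId 𝒜 h u)) (hZ : ∀ t ∈ T, ∃ u ∈ Z, DividesNumerator t u) :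
    letI : Algebra (HomogeneousLocalization 𝒜 S) (HomogeneousLocalization 𝒜 T) :=
      (mapId 𝒜 h).toAlgebra
    IsLocalization Z (HomogeneousLocalization 𝒜 T) := by
  let : Algebra (HomogeneousLocalization 𝒜 S) (HomogeneousLocalization 𝒜 T) :=
    (mapId 𝒜 h).toAlgebra
  refine (isLocalization_iff _ _).mpr ⟨fun u => hunit u u.2, fun w => ?_, fun {x y} hxy => ?_⟩
  · obtain ⟨c, rfl⟩ := mk_surjective w
    obtain ⟨u, huZ, hu⟩ := hZ c.den c.den_mem
    obtain ⟨v, hv⟩ := hu.exists_mk_mul_mapId_eq h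
    exact ⟨(v, ⟨u, huZ⟩), hv⟩
  · have hsub : mapId 𝒜 h (x - y) = 0 := by
      rw [map_sub, sub_eq_zero]
      exact hxy
    obtain ⟨u, huZ, hu⟩ := exists_mul_eq_zero_of_mapId_eq_zero h hZ hsub
    exact ⟨⟨u, huZ⟩, sub_eq_zero.mp ((mul_sub u x y).symm.trans hu)⟩

end Potion

theorem magic_of_potions_isLocalization_general
    {M A σ I J : Type*} [AddCommMonoid M] [DecidableEq M] [CommRing A]
    [SetLike σ A] [AddSubgroupClass σ A] (𝒜 : M → σ) [GradedRing 𝒜]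
    (f : I → A) (d : I → M) (g : J → A) (e : J → M)
    (hfd : ∀ i, f i ∈ 𝒜 (d i)) (hge : ∀ j, g j ∈ 𝒜 (e j))
    (χ : HomogeneousLocalization 𝒜 (Submonoid.closure (Set.range f)) →+*
        HomogeneousLocalization 𝒜 (Submonoid.closure (Set.range f ∪ Set.range g)))
    (hχ : ∀ w, (χ w).val =
      locMap (Submonoid.closure_mono Set.subset_union_left) w.val)
    (n : J → ℕ) (hn : ∀ j, 0 < n j) (νp νm : J → I →₀ ℕ)
    (hdeg : ∀ j, n j • e j + ((νm j).sum fun i c => c • d i)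
      = (νp j).sum fun i c => c • d i)
    (z : J → HomogeneousLocalization 𝒜 (Submonoid.closure (Set.range f)))
    (hz : ∀ j, (z j).val =
      Localization.mk (g j ^ n j * ∏ i ∈ (νm j).support, f i ^ (νm j) i)
        ⟨∏ i ∈ (νp j).support, f i ^ (νp j) i, prodPow_mem_closure f (νp j)⟩) :
    letI : Algebra (HomogeneousLocalization 𝒜 (Submonoid.closure (Set.range f)))
        (HomogeneousLocalization 𝒜 (Submonoid.closure (Set.range f ∪ Set.range g))) :=
      χ.toAlgebra
    IsLocalization (Submonoid.closure (Set.range z))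
      (HomogeneousLocalization 𝒜 (Submonoid.closure (Set.range f ∪ Set.range g))) := by
  obtain rfl := eq_mapId_of_val_eq_locMap hχ
  have hden (j) : (∏ i ∈ (νp j).support, f i ^ νp j i) ∈
      𝒜 (n j • e j + (νm j).sum fun i c => c • d i) :=
    hdeg j ▸ prodPow_mem_graded hfd (νp j)
  refine isLocalization_mapId _ (Z := .closure (.range z)) ?_ fun t ht =>
    DividesNumerator.exists_of_mem_closure ?_ ht
  · suffices Submonoid.closure (Set.range z) ≤ (IsUnit.submonoid _).comap (mapId 𝒜 _) from this
    rw [Submonoid.closure_le]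
    rintro _ ⟨j, rfl⟩
    exact isUnit_mapId_of_val_eq_mk _
      (mul_mem_graded (pow_mem_graded _ (hge j)) (prodPow_mem_graded hfd _)) (hden j)
      (mul_mem (pow_mem (Submonoid.subset_closure (.inr ⟨j, rfl⟩)) _)
        (Submonoid.closure_mono Set.subset_union_left (prodPow_mem_closure f _))) (hz j)
  · rintro _ (⟨i, rfl⟩ | ⟨j, rfl⟩)
    · exact ⟨1, one_mem _, .one_right (Submonoid.subset_closure ⟨i, rfl⟩) (hfd i)⟩
    · exact ⟨z j, Submonoid.subset_closure ⟨j, rfl⟩,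
        .of_val_eq_mk_pow_mul (hn j).ne' (hge j) (prodPow_mem_graded hfd _) (hden j) (hz j)⟩

theorem magic_of_potions_isLocalization
    {M A I J : Type*} [AddCommGroup M] [DecidableEq M] [CommRing A]
    (𝒜 : M → Submodule ℤ A) [GradedRing 𝒜]
    (f : I → A) (d : I → M) (g : J → A) (e : J → M)
    (hf0 : ∀ i, f i ≠ 0) (hfd : ∀ i, f i ∈ 𝒜 (d i))
    (hg0 : ∀ j, g j ≠ 0) (hge : ∀ j, g j ∈ 𝒜 (e j))
    (hrel : IsRelevant 𝒜 f)
    (hdivclosed : {x : A | x ≠ 0 ∧ (∃ m, x ∈ 𝒜 m) ∧ ∃ i, x ∣ f i} = Set.range f)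
    (χ : HomogeneousLocalization 𝒜 (Submonoid.closure (Set.range f)) →+*
        HomogeneousLocalization 𝒜 (Submonoid.closure (Set.range f ∪ Set.range g)))
    (hχ : ∀ w, (χ w).val =
      locMap (Submonoid.closure_mono Set.subset_union_left) w.val)
    (n : J → ℕ) (hn : ∀ j, 0 < n j) (νp νm : J → I →₀ ℕ)
    (hdeg : ∀ j, n j • e j + ((νm j).sum fun i c => c • d i)
      = (νp j).sum fun i c => c • d i)
    (z : J → HomogeneousLocalization 𝒜 (Submonoid.closure (Set.range f)))
    (hz : ∀ j, (z j).val =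
      Localization.mk (g j ^ n j * ∏ i ∈ (νm j).support, f i ^ (νm j) i)
        ⟨∏ i ∈ (νp j).support, f i ^ (νp j) i, prodPow_mem_closure f (νp j)⟩) :
    letI : Algebra (HomogeneousLocalization 𝒜 (Submonoid.closure (Set.range f)))
        (HomogeneousLocalization 𝒜 (Submonoid.closure (Set.range f ∪ Set.range g))) :=
      χ.toAlgebra
    IsLocalization (Submonoid.closure (Set.range z))
      (HomogeneousLocalization 𝒜 (Submonoid.closure (Set.range f ∪ Set.range g))) :=
  magic_of_potions_isLocalization_general 𝒜 f d g e hfd hge χ hχ n hn νp νm hdeg z hz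
end

section
/- (Kernel description in the magic of potions.) Let f = {a_i}_{i∈I} and g = {b_j}_{j∈J} be families of homogeneous elements of an M-graded commutative ring A, let S and T be the multiplicative submonoids generated by f and by f ∪ g, and let χ : A_{(f)} → A_{(f∪g)} be the canonical ring homomorphism between potions. Let z ∈ A_{(f)} be an element represented by a fraction x / ∏_i a_i^{θ_i} with x homogeneous and θ : I → ℕ finitely supported. Then χ(z) = 0 if and only if there exist finitely supported δ : I → ℕ and γ : J → ℕ such that x · ∏_i a_i^{δ_i} · ∏_j b_j^{γ_j} = 0 in A. -/
theorem locMap_mk_eq_zero_iff {A : Type*} [CommRing A] {S T : Submonoid A} (h : S ≤ T)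
    (x : A) (s : S) : locMap h (Localization.mk x s) = 0 ↔ ∃ t ∈ T, x * t = 0 := by
  rw [locMap, Localization.mk_eq_mk', IsLocalization.map_mk', IsLocalization.mk'_eq_zero_iff]
  simp only [RingHom.id_apply, Subtype.exists, exists_prop, mul_comm]

theorem mem_closure_range_union_range_iff {N I J : Type*} [CommMonoid N]
    {f : I → N} {g : J → N} {t : N} :
    t ∈ Submonoid.closure (Set.range f ∪ Set.range g) ↔
      ∃ (δ : I →₀ ℕ) (γ : J →₀ ℕ), δ.prod (f · ^ ·) * γ.prod (g · ^ ·) = t := by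
  simp only [Submonoid.closure_union, Submonoid.mem_sup, Submonoid.mem_closure_range_iff]
  constructor
  · rintro ⟨_, ⟨δ, rfl⟩, _, ⟨γ, rfl⟩, rfl⟩
    exact ⟨δ, γ, rfl⟩
  · rintro ⟨δ, γ, rfl⟩
    exact ⟨_, ⟨δ, rfl⟩, _, ⟨γ, rfl⟩, rfl⟩

section Potion

variable {M A σ : Type*} [AddCommMonoid M] [DecidableEq M] [CommRing A] [SetLike σ A]
  [AddSubgroupClass σ A] {𝒜 : M → σ} [GradedRing 𝒜]

theorem eq_zero_iff_of_val_eq_locMap {S T : Submonoid A} {h : S ≤ T}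
    {w : HomogeneousLocalization 𝒜 T} {x : A} {s : S}
    (hw : w.val = locMap h (Localization.mk x s)) : w = 0 ↔ ∃ t ∈ T, x * t = 0 := by
  rw [HomogeneousLocalization.ext_iff_val, HomogeneousLocalization.val_zero, hw,
    locMap_mk_eq_zero_iff]

theorem magic_of_potions_kernel_general {I J : Type*} (f : I → A) (g : J → A)
    (χ : HomogeneousLocalization 𝒜 (Submonoid.closure (Set.range f)) →+*
        HomogeneousLocalization 𝒜 (Submonoid.closure (Set.range f ∪ Set.range g)))
    (hχ : ∀ w, (χ w).val =
      locMap (Submonoid.closure_mono Set.subset_union_left) w.val)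
    (z : HomogeneousLocalization 𝒜 (Submonoid.closure (Set.range f)))
    (x : A) (s : Submonoid.closure (Set.range f)) (hz : z.val = Localization.mk x s) :
    χ z = 0 ↔ ∃ (δ : I →₀ ℕ) (γ : J →₀ ℕ),
      x * δ.prod (f · ^ ·) * γ.prod (g · ^ ·) = 0 := by
  rw [eq_zero_iff_of_val_eq_locMap (hz ▸ hχ z)]
  constructor
  · rintro ⟨t, ht, hxt⟩
    obtain ⟨δ, γ, rfl⟩ := mem_closure_range_union_range_iff.mp ht
    exact ⟨δ, γ, by rwa [mul_assoc]⟩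
  · rintro ⟨δ, γ, hxδγ⟩
    exact ⟨_, mem_closure_range_union_range_iff.mpr ⟨δ, γ, rfl⟩, by rwa [← mul_assoc]⟩

end Potion

theorem magic_of_potions_kernel
    {M A I J : Type*} [AddCommGroup M] [DecidableEq M] [CommRing A]
    (𝒜 : M → Submodule ℤ A) [GradedRing 𝒜]
    (f : I → A) (d : I → M) (g : J → A)
    (hf0 : ∀ i, f i ≠ 0) (hfd : ∀ i, f i ∈ 𝒜 (d i))
    (hg : ∀ j, g j ≠ 0 ∧ ∃ m, g j ∈ 𝒜 m)
    (χ : HomogeneousLocalization 𝒜 (Submonoid.closure (Set.range f)) →+*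
        HomogeneousLocalization 𝒜 (Submonoid.closure (Set.range f ∪ Set.range g)))
    (hχ : ∀ w, (χ w).val =
      locMap (Submonoid.closure_mono Set.subset_union_left) w.val)
    (z : HomogeneousLocalization 𝒜 (Submonoid.closure (Set.range f)))
    (x : A) (θ : I →₀ ℕ)
    (hx : x ∈ 𝒜 (θ.sum fun i c => c • d i))
    (hzval : z.val = Localization.mk x
      ⟨∏ i ∈ θ.support, f i ^ θ i, prodPow_mem_closure f θ⟩) :
    χ z = 0 ↔ ∃ (δ : I →₀ ℕ) (γ : J →₀ ℕ),
      x * (∏ i ∈ δ.support, f i ^ δ i) * ∏ j ∈ γ.support, g j ^ γ j = 0 :=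
  magic_of_potions_kernel_general f g χ hχ z x _ hzval
end

section
/- (Invertibility, chart-level form.) Let A be a commutative ring graded by an abelian group M via 𝒜, let f = {a_i}_{i∈I} be a family of homogeneous elements with a_i of degree d_i, and let S be the multiplicative submonoid generated by f. Let α ∈ M and suppose there exist finitely supported ν⁺, ν⁻ : I → ℕ with α = Σ_i ν⁺_i • d_i − Σ_i ν⁻_i • d_i. Let u ∈ Localization S be the fraction (∏_i a_i^{ν⁺_i}) / (∏_i a_i^{ν⁻_i}). Let D_α ⊆ Localization S be the set of elements expressible as a fraction x / ∏_i a_i^{θ_i} with θ : I → ℕ finitely supported and x homogeneous of degree α + Σ_i θ_i • d_i, and let D_0 be the corresponding set for α = 0 (which is the image of val : HomogeneousLocalization 𝒜 S → Localization S). Then multiplication by u gives a bijection from D_0 onto D_α; in particular D_α = u • D_0 as subsets of Localization S. -/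
open Pointwise

/-- `potionChart 𝒜 f d α` is the set of elements of `Localization S` (where `S` is the
multiplicative submonoid generated by the family `f`, with `f i ∈ 𝒜 (d i)`) that can be
written as a fraction `x / ∏ᵢ (f i) ^ θᵢ` with `x` homogeneous of degree
`α + Σᵢ θᵢ • d i`. For `α = 0` this is the image of
`val : HomogeneousLocalization 𝒜 S → Localization S`. -/
def potionChart {M A I : Type*} [AddCommGroup M] [DecidableEq M] [CommRing A]
    (𝒜 : M → Submodule ℤ A) (f : I → A) (d : I → M) (α : M) :
    Set (Localization (Submonoid.closure (Set.range f))) :=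
  {y | ∃ (x : A) (θ : I →₀ ℕ), x ∈ 𝒜 (α + θ.sum fun i c => c • d i) ∧
    y = Localization.mk x ⟨∏ i ∈ θ.support, f i ^ θ i, prodPow_mem_closure f θ⟩}

section PowerProduct

variable {A I : Type*} [CommRing A]

/-- The power product `∏ᵢ (f i) ^ θᵢ`, as an element of the submonoid generated by `f`. These are
the denominators allowed in `potionChart`. -/
def powerProduct (f : I → A) (θ : I →₀ ℕ) : Submonoid.closure (Set.range f) :=
  ⟨∏ i ∈ θ.support, f i ^ θ i, prodPow_mem_closure f θ⟩

lemma powerProduct_add (f : I → A) (θ η : I →₀ ℕ) :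
    powerProduct f (θ + η) = powerProduct f θ * powerProduct f η := by
  classical
  exact Subtype.ext <| Finsupp.prod_add_index' (h := fun i c ↦ f i ^ c)
    (fun i ↦ pow_zero (f i)) (fun i ↦ pow_add (f i))

lemma powerProduct_mem_graded {M σ : Type*} [AddCommMonoid M] [SetLike σ A] (𝒜 : M → σ)
    [SetLike.GradedMonoid 𝒜] {f : I → A} {d : I → M} (hfd : ∀ i, f i ∈ 𝒜 (d i)) (θ : I →₀ ℕ) :
    (powerProduct f θ : A) ∈ 𝒜 (Finsupp.linearCombination ℕ d θ) :=
  SetLike.prod_pow_mem_graded 𝒜 d f θ fun i _ ↦ hfd i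

/-- The Laurent monomial `(∏ᵢ (f i) ^ pᵢ) / (∏ᵢ (f i) ^ mᵢ)` in the localization at the submonoid
generated by `f`, with its exponent given as a difference `p - m` of natural exponents. -/
def laurentMonomial (f : I → A) (p m : I →₀ ℕ) :
    Localization (Submonoid.closure (Set.range f)) :=
  Localization.mk (powerProduct f p) (powerProduct f m)

lemma laurentMonomial_mul_swap (f : I → A) (p m : I →₀ ℕ) :
    laurentMonomial f p m * laurentMonomial f m p = 1 := by
  simp only [laurentMonomial, Localization.mk_eq_mk', IsLocalization.mk'_mul_mk'_eq_one]

end PowerProduct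

section PotionChart

variable {M A I : Type*} [AddCommGroup M] [DecidableEq M] [CommRing A]
  (𝒜 : M → Submodule ℤ A) [SetLike.GradedMonoid 𝒜] {f : I → A} {d : I → M}

lemma mapsTo_laurentMonomial_mul_potionChart (hfd : ∀ i, f i ∈ 𝒜 (d i)) {β γ : M}
    {p m : I →₀ ℕ}
    (hdeg : γ + Finsupp.linearCombination ℕ d m = β + Finsupp.linearCombination ℕ d p) :
    Set.MapsTo (laurentMonomial f p m * ·) (potionChart 𝒜 f d β) (potionChart 𝒜 f d γ) := by
  rintro _ ⟨x, θ, hx, rfl⟩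
  refine ⟨powerProduct f p * x, m + θ, ?_, ?_⟩
  · have degree_eq : γ + Finsupp.linearCombination ℕ d (m + θ) =
        Finsupp.linearCombination ℕ d p + (β + Finsupp.linearCombination ℕ d θ) := by
      rw [map_add, ← add_assoc, hdeg, add_comm β, add_assoc]
    exact degree_eq ▸ SetLike.mul_mem_graded (powerProduct_mem_graded 𝒜 hfd p) hx
  · change Localization.mk _ (powerProduct f m) * Localization.mk x (powerProduct f θ) =
      Localization.mk _ (powerProduct f (m + θ))
    rw [Localization.mk_mul, powerProduct_add]

theorem twist_chart_invertibility_general (hfd : ∀ i, f i ∈ 𝒜 (d i)) {β γ : M} {p m : I →₀ ℕ}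
    (hdeg : γ + Finsupp.linearCombination ℕ d m = β + Finsupp.linearCombination ℕ d p) :
    Set.BijOn (laurentMonomial f p m * ·) (potionChart 𝒜 f d β) (potionChart 𝒜 f d γ) ∧
      potionChart 𝒜 f d γ = laurentMonomial f p m • potionChart 𝒜 f d β := by
  have inverse (p m : I →₀ ℕ) :
      Function.LeftInverse (laurentMonomial f p m * ·) (laurentMonomial f m p * ·) := fun y ↦ by
    simp only [← mul_assoc, laurentMonomial_mul_swap, one_mul]
  have bijective :
      Set.BijOn (laurentMonomial f p m * ·) (potionChart 𝒜 f d β) (potionChart 𝒜 f d γ) :=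
    Set.InvOn.bijOn ⟨fun y _ ↦ inverse m p y, fun y _ ↦ inverse p m y⟩
      (mapsTo_laurentMonomial_mul_potionChart 𝒜 hfd hdeg)
      (mapsTo_laurentMonomial_mul_potionChart 𝒜 hfd hdeg.symm)
  exact ⟨bijective, bijective.image_eq.symm⟩

end PotionChart

theorem twist_chart_invertibility
    {M A I : Type*} [AddCommGroup M] [DecidableEq M] [CommRing A]
    (𝒜 : M → Submodule ℤ A) [GradedRing 𝒜]
    (f : I → A) (d : I → M)
    (hf0 : ∀ i, f i ≠ 0) (hfd : ∀ i, f i ∈ 𝒜 (d i))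
    (α : M) (νp νm : I →₀ ℕ)
    (hα : α = (νp.sum fun i c => c • d i) - νm.sum fun i c => c • d i)
    (u : Localization (Submonoid.closure (Set.range f)))
    (hu : u = Localization.mk (∏ i ∈ νp.support, f i ^ νp i)
      ⟨∏ i ∈ νm.support, f i ^ νm i, prodPow_mem_closure f νm⟩) :
    Set.BijOn (fun y => u * y) (potionChart 𝒜 f d 0) (potionChart 𝒜 f d α) ∧
      potionChart 𝒜 f d α = u • potionChart 𝒜 f d 0 := by
  subst hα hu
  exact twist_chart_invertibility_general 𝒜 hfd (by simp [Finsupp.linearCombination_apply])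
end
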